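/- Let S be an infinite Sidon set of positive integers with strictly increasing enumeration s_1 < s_2 < s_3 < ⋯, and let N ≥ 2 be an integer. Then ∑_{n=N}^{∞} 1/s_n < 2 ln(1 − 1/√N) + 2/(√N − 1), and consequently ∑_{n=N}^{∞} 1/s_n < 2/(N − √N). -/

import Mathlib

/-!
Throughout, `s_n` denotes the `n`-th element `s (n - 1)`.

The claimed bound `F N = 2 log (1 - 1/√N) + 2/(√N - 1)` is `∫_N^∞ dt / (t - √t)²`. By convexity of
the integrand, `F n - F (n + 1) > 1 / Q (n + 1/2)` with `Q c = (c - √c)²` (`one_div_Q_lt`), so the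
tail is less than `F N` whenever `s_n ≥ Q (n + 1/2)` for all `n`. Lindström's inequality falls
short of this by about `n`, so a pointwise estimate from it does not suffice, and the following
refinement is used.

Lindström's argument counts pairs of elements in the sliding windows of length `u` that meet
`[1, s_n]`. Distinctness of differences bounds the number of pairs, while each of the first `n`
elements lies in `u` windows. The next element `s_{n+1} = s_n + g` also lies in `u - g` of
them, so it counts as a fraction `1 - g/u` of an element (`master`). Consequently

* if `g` is at most about `u/2 ≈ n^{3/2}/2`, the count behaves as if there were `n + 1/2`
  elements up to `s_n`, and `s_n ≥ Q (n + 1/2)` holds;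
* otherwise `s_{n+1}` is so large that
  `1/s_n + 1/s_{n+1} ≤ 1 / Q (n + 1/2) + 1 / Q (n + 3/2)`, even though `s_n` may be smaller.

For `n ≥ 40` this dichotomy follows from a polynomial inequality in `√(n + 1/2)`
(`dichotomy_large`); for smaller `n` it is verified with explicit window lengths
(`dichotomy_small`). In both cases one or two consecutive terms of the series are dominated by the
corresponding increment of `F`, and telescoping gives the first bound (`tsum_lt`). The second
follows from `log (1 - x) < -x`.
-/

open scoped ENNReal

/-- A set of positive integers is a Sidon set: all pairwise sums `s + t`
with `s ≤ t` are distinct. -/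
def IsSidon (S : Set ℕ) : Prop :=
  (∀ s ∈ S, 0 < s) ∧
    ∀ a ∈ S, ∀ b ∈ S, ∀ c ∈ S, ∀ d ∈ S,
      a ≤ b → c ≤ d → a + b = c + d → a = c ∧ b = d

/-! ### Counting pairs in sliding windows -/

/-- The Sidon condition without the ordering hypotheses on the two sums. -/
lemma IsSidon.add_eq_add {S : Set ℕ} (h : IsSidon S) {a b c d : ℕ} (ha : a ∈ S) (hb : b ∈ S)
    (hc : c ∈ S) (hd : d ∈ S) (e : a + b = c + d) : (a = c ∧ b = d) ∨ (a = d ∧ b = c) := by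
  have H := h.2
  rcases le_total a b with hab | hab <;> rcases le_total c d with hcd | hcd
  · exact Or.inl (H a ha b hb c hc d hd hab hcd e)
  · exact Or.inr (H a ha b hb d hd c hc hab hcd (by omega))
  · have := H b hb a ha c hc d hd hab hcd (by omega)
    exact Or.inr this.symm
  · have := H b hb a ha d hd c hc hab hcd (by omega)
    exact Or.inl this.symm

lemma sum_Ico_sub_mul_two (u : ℕ) : (∑ d ∈ Finset.Ico 1 u, (u - d)) * 2 = u * (u - 1) := by
  rw [← Finset.sum_range_id_mul_two]
  congr 1
  rcases u with _ | u
  · simp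
  rw [Finset.sum_Ico_eq_sum_range, ← Finset.sum_range_reflect, Finset.sum_range_succ']
  simp only [Nat.add_sub_cancel, add_zero]
  refine Finset.sum_congr rfl fun i hi => ?_
  have := Finset.mem_range.1 hi
  omega

/-- The indices `i < n` for which `s i` lies in the window `(J - u, J]`. -/
def window (s : ℕ → ℕ) (n u J : ℕ) : Finset ℕ :=
  (Finset.range n).filter fun i => s i ≤ J ∧ J < s i + u

lemma card_offDiag_eq_two_mul (W : Finset ℕ) :
    W.offDiag.card = 2 * ((W ×ˢ W).filter fun x => x.1 < x.2).card := by
  have h1 : (W.offDiag.filter fun x => x.1 < x.2) = (W ×ˢ W).filter fun x => x.1 < x.2 := by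
    ext x
    simp only [Finset.mem_filter, Finset.mem_offDiag, Finset.mem_product]
    constructor
    · rintro ⟨⟨h1, h2, -⟩, h⟩; exact ⟨⟨h1, h2⟩, h⟩
    · rintro ⟨⟨h1, h2⟩, h⟩; exact ⟨⟨h1, h2, h.ne⟩, h⟩
  have h2 : (W.offDiag.filter fun x => ¬ x.1 < x.2).card =
      ((W ×ˢ W).filter fun x => x.1 < x.2).card := by
    refine Finset.card_nbij' Prod.swap Prod.swap ?_ ?_ (fun _ _ => rfl) (fun _ _ => rfl)
    · intro x hx
      simp only [Finset.coe_filter, Finset.mem_offDiag, Finset.mem_product, Set.mem_ofPred_eq,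
        Prod.fst_swap, Prod.snd_swap] at hx ⊢
      exact ⟨⟨hx.1.2.1, hx.1.1⟩, by have := hx.1.2.2; omega⟩
    · intro x hx
      simp only [Finset.coe_filter, Finset.mem_offDiag, Finset.mem_product, Set.mem_ofPred_eq,
        Prod.fst_swap, Prod.snd_swap] at hx ⊢
      exact ⟨⟨hx.1.2, hx.1.1, by omega⟩, by omega⟩
  rw [← Finset.card_filter_add_card_filter_not (fun x : ℕ × ℕ => x.1 < x.2), h1, h2, two_mul]

/-- Every pair `i < j` lies in at most `u - (s j - s i)` windows, and the differences
`s j - s i` are distinct. -/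
lemma sum_card_offDiag_window_le {s : ℕ → ℕ} (hmono : StrictMono s)
    (hS : IsSidon (Set.range s)) (n u : ℕ) (T : Finset ℕ) :
    ∑ J ∈ T, (window s n u J).offDiag.card ≤ u * (u - 1) := by
  set P := (Finset.range n ×ˢ Finset.range n).filter fun x => x.1 < x.2 with hP
  have hcard : ∀ J, ((window s n u J ×ˢ window s n u J).filter fun x => x.1 < x.2).card =
      (P.filter fun x => x.1 ∈ window s n u J ∧ x.2 ∈ window s n u J).card := by
    intro J
    congr 1
    ext x
    simp only [hP, window, Finset.mem_filter, Finset.mem_product]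
    tauto
  have hswap : ∑ J ∈ T, (P.filter fun x => x.1 ∈ window s n u J ∧ x.2 ∈ window s n u J).card =
      ∑ x ∈ P, (T.filter fun J => x.1 ∈ window s n u J ∧ x.2 ∈ window s n u J).card :=
    Finset.sum_card_bipartiteAbove_eq_sum_card_bipartiteBelow
      (fun J (x : ℕ × ℕ) => x.1 ∈ window s n u J ∧ x.2 ∈ window s n u J)
  have hpair : ∀ x ∈ P, (T.filter fun J => x.1 ∈ window s n u J ∧ x.2 ∈ window s n u J).card ≤
      u - (s x.2 - s x.1) := by
    intro x hx
    have hlt : s x.1 < s x.2 := hmono (Finset.mem_filter.1 hx).2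
    calc _ ≤ (Finset.Ico (s x.2) (s x.1 + u)).card := by
          refine Finset.card_le_card fun J hJ => ?_
          simp only [window, Finset.mem_filter] at hJ
          exact Finset.mem_Ico.2 ⟨hJ.2.2.2.1, hJ.2.1.2.2⟩
      _ ≤ _ := by rw [Nat.card_Ico]; omega
  have hinj : Set.InjOn (fun x : ℕ × ℕ => s x.2 - s x.1) (P : Set (ℕ × ℕ)) := by
    rintro ⟨i, j⟩ hx ⟨i', j'⟩ hy h
    have h1 : s i < s j := hmono (Finset.mem_filter.1 hx).2
    have h2 : s i' < s j' := hmono (Finset.mem_filter.1 hy).2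
    have e : s j + s i' = s j' + s i := by simp only at h; omega
    rcases hS.add_eq_add ⟨j, rfl⟩ ⟨i', rfl⟩ ⟨j', rfl⟩ ⟨i, rfl⟩ e with h | h
    · rw [hmono.injective h.1, hmono.injective h.2]
    · omega
  have hdiff : ∑ x ∈ P, (u - (s x.2 - s x.1)) ≤ ∑ d ∈ Finset.Ico 1 u, (u - d) := by
    rw [← Finset.sum_image (f := fun d => u - d) hinj]
    rw [← Finset.sum_filter_add_sum_filter_not _ (fun d => d < u)]
    have hz : ∑ d ∈ (P.image fun x : ℕ × ℕ => s x.2 - s x.1).filter (fun d => ¬ d < u),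
        (u - d) = 0 := by
      refine Finset.sum_eq_zero fun d hd => ?_
      have := (Finset.mem_filter.1 hd).2
      omega
    rw [hz, add_zero]
    refine Finset.sum_le_sum_of_subset fun d hd => ?_
    obtain ⟨hd, hdu⟩ := Finset.mem_filter.1 hd
    obtain ⟨x, hx, rfl⟩ := Finset.mem_image.1 hd
    have : s x.1 < s x.2 := hmono (Finset.mem_filter.1 hx).2
    exact Finset.mem_Ico.2 ⟨by omega, hdu⟩
  simp_rw [card_offDiag_eq_two_mul, hcard]
  rw [← Finset.mul_sum, hswap, ← sum_Ico_sub_mul_two, mul_comm]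
  exact Nat.mul_le_mul_right 2 ((Finset.sum_le_sum hpair).trans hdiff)

/-- Double counting of the incidences between windows and elements: each of the first `n`
elements lies in `u` windows, and `s n`, although beyond the range, still lies in
`u - (s n - s (n - 1))` of them. -/
lemma le_sum_card_window {s : ℕ → ℕ} (hmono : StrictMono s) (hpos : ∀ i, 0 < s i)
    {n : ℕ} (hn : 1 ≤ n) (u : ℕ) :
    n * u + (u - (s n - s (n - 1))) ≤
      ∑ J ∈ Finset.Ico 1 (s (n - 1) + u), (window s (n + 1) u J).card := by
  have hswap : ∑ J ∈ Finset.Ico 1 (s (n - 1) + u), (window s (n + 1) u J).card =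
      ∑ i ∈ Finset.range (n + 1), ((Finset.Ico 1 (s (n - 1) + u)).filter
        fun J => s i ≤ J ∧ J < s i + u).card :=
    Finset.sum_card_bipartiteAbove_eq_sum_card_bipartiteBelow
      (fun J i => s i ≤ J ∧ J < s i + u)
  rw [hswap, Finset.sum_range_succ]
  refine Nat.add_le_add ?_ ?_
  · have : ∀ i ∈ Finset.range n, u ≤ ((Finset.Ico 1 (s (n - 1) + u)).filter
        fun J => s i ≤ J ∧ J < s i + u).card := by
      intro i hi
      have h1 : s i ≤ s (n - 1) := hmono.monotone (by have := Finset.mem_range.1 hi; omega)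
      have h0 := hpos i
      calc u = (Finset.Ico (s i) (s i + u)).card := by simp
        _ ≤ _ := Finset.card_le_card fun J hJ => by
          simp only [Finset.mem_Ico, Finset.mem_filter] at hJ ⊢
          omega
    simpa using Finset.sum_le_sum this
  · have h1 : s (n - 1) < s n := hmono (by omega)
    have h0 := hpos n
    calc u - (s n - s (n - 1)) = (Finset.Ico (s n) (s (n - 1) + u)).card := by
          rw [Nat.card_Ico]; omega
      _ ≤ _ := Finset.card_le_card fun J hJ => by
          simp only [Finset.mem_Ico, Finset.mem_filter] at hJ ⊢
          omega

/-- Master inequality: `D (D - 1)` is bounded below by a linear function `p D - q` of the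
number `D` of elements in a window. -/
lemma master {s : ℕ → ℕ} (hmono : StrictMono s) (hS : IsSidon (Set.range s))
    {n : ℕ} (hn : 1 ≤ n) {u : ℕ} (hu : 1 ≤ u) {p q : ℝ} (hp : 0 ≤ p)
    (hpq : ∀ D : ℕ, p * D - q ≤ D * (D - 1)) :
    p * (n * u) ≤ u * (u - 1) + q * (s (n - 1) + u - 1) ∧
    p * (n * u + (u - (s n - s (n - 1)))) ≤ u * (u - 1) + q * (s (n - 1) + u - 1) := by
  have hpos : ∀ i, 0 < s i := fun i => hS.1 _ ⟨i, rfl⟩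
  have h1 := sum_card_offDiag_window_le hmono hS (n + 1) u (Finset.Ico 1 (s (n - 1) + u))
  have h2 := le_sum_card_window hmono hpos hn u
  set I := Finset.Ico 1 (s (n - 1) + u)
  set K := ∑ J ∈ I, (window s (n + 1) u J).card
  have hlt : s (n - 1) < s n := hmono (by omega)
  have h3 : p * (K : ℝ) - q * (s (n - 1) + u - 1) ≤ u * (u - 1) := by
    have hI : (I.card : ℝ) = s (n - 1) + u - 1 := by
      rw [Nat.card_Ico, Nat.cast_sub (by omega)]; push_cast; ring
    calc p * (K : ℝ) - q * (s (n - 1) + u - 1)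
        = ∑ J ∈ I, (p * ((window s (n + 1) u J).card : ℝ) - q) := by
          rw [Finset.sum_sub_distrib, ← Finset.mul_sum, Finset.sum_const, nsmul_eq_mul, hI]
          push_cast [K]; ring
      _ ≤ ∑ J ∈ I, ((window s (n + 1) u J).offDiag.card : ℝ) := by
          refine Finset.sum_le_sum fun J _ => (hpq _).trans (le_of_eq ?_)
          rw [Finset.offDiag_card, Nat.cast_sub (Nat.le_mul_self _)]
          push_cast; ring
      _ ≤ ((u * (u - 1) : ℕ) : ℝ) := by exact_mod_cast h1
      _ = u * (u - 1) := by rw [Nat.cast_mul, Nat.cast_sub hu]; simp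
  have h4 : ((n * u + (u - (s n - s (n - 1))) : ℕ) : ℝ) ≤ K := by exact_mod_cast h2
  have h5 : (n * u : ℝ) ≤ K := by
    have : n * u ≤ K := le_trans (Nat.le_add_right _ _) h2
    exact_mod_cast this
  have h6 : (n * u + (u - (s n - s (n - 1))) : ℝ) ≤ K := by
    have h7 : n * u + u + s (n - 1) ≤ K + s n := by omega
    have h8 : (n * u + u + s (n - 1) : ℝ) ≤ K + s n := by exact_mod_cast h7
    linarith
  have h9 := mul_le_mul_of_nonneg_left h5 hp
  have h10 := mul_le_mul_of_nonneg_left h6 hp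
  constructor <;> linarith

/-! ### The comparison function -/

/-- `Q c = (c - √c)²`; the function `1 / Q` is the integrand whose tail integral over `[N, ∞)`
is the claimed bound. -/
noncomputable def Q (c : ℝ) : ℝ := (c - Real.sqrt c) ^ 2

/-- The claimed bound, as a function of a real variable. -/
noncomputable def F (x : ℝ) : ℝ :=
  2 * Real.log (1 - 1 / Real.sqrt x) + 2 / (Real.sqrt x - 1)

lemma Q_pos {c : ℝ} (hc : 1 < c) : 0 < Q c := by
  have h : 1 < Real.sqrt c := by rw [Real.lt_sqrt] <;> norm_num; exact hc
  have h2 := Real.sq_sqrt (by linarith : (0:ℝ) ≤ c)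
  have : 0 < c - Real.sqrt c := by nlinarith
  unfold Q; positivity

lemma hasDerivAt_F {x : ℝ} (hx : 1 < x) : HasDerivAt F (-(1 / Q x)) x := by
  have h : 1 < Real.sqrt x := by rw [Real.lt_sqrt] <;> norm_num; exact hx
  have h2 := Real.sq_sqrt (by linarith : (0:ℝ) ≤ x)
  have hs := Real.hasDerivAt_sqrt (by linarith : x ≠ 0)
  have hne : (1 - 1 / Real.sqrt x) ≠ 0 := by
    have : 1 / Real.sqrt x < 1 := by rw [div_lt_one (by linarith)]; exact h
    linarith
  have h0 : Real.sqrt x ≠ 0 := by linarith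
  have h1 : Real.sqrt x - 1 ≠ 0 := by linarith
  have hd := ((((hasDerivAt_const x (1:ℝ)).div hs h0).const_sub 1).log hne).const_mul 2 |>.add
    ((hasDerivAt_const x (2:ℝ)).div (hs.sub_const 1) h1)
  refine hd.congr_deriv ?_
  unfold Q
  have e : x - Real.sqrt x = Real.sqrt x * (Real.sqrt x - 1) := by nlinarith
  rw [e]
  have e2 : 1 - 1 / Real.sqrt x = (Real.sqrt x - 1) / Real.sqrt x := by field_simp
  simp only [Pi.div_apply]
  rw [e2]
  field_simp
  ring

lemma F_nonneg {x : ℝ} (hx : 1 < x) : 0 ≤ F x := by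
  have h : 1 < Real.sqrt x := by rw [Real.lt_sqrt] <;> norm_num; exact hx
  unfold F
  have hpos : 0 < 1 - 1 / Real.sqrt x := by
    have : 1 / Real.sqrt x < 1 := by rw [div_lt_one (by linarith)]; exact h
    linarith
  have := Real.one_sub_inv_le_log_of_pos hpos
  have e : 1 - (1 - 1 / Real.sqrt x)⁻¹ = - (1 / (Real.sqrt x - 1)) := by
    have h1 : Real.sqrt x - 1 ≠ 0 := by linarith
    have h0 : Real.sqrt x ≠ 0 := by linarith
    have e2 : 1 - 1 / Real.sqrt x = (Real.sqrt x - 1) / Real.sqrt x := by field_simp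
    rw [e2]
    field_simp
    ring
  rw [e] at this
  have e3 : 2 / (Real.sqrt x - 1) = 2 * (1 / (Real.sqrt x - 1)) := by ring
  rw [e3]; linarith

lemma F_lt {x : ℝ} (hx : 1 < x) : F x < 2 / (x - Real.sqrt x) := by
  have h : 1 < Real.sqrt x := by rw [Real.lt_sqrt] <;> norm_num; exact hx
  have h2 := Real.sq_sqrt (by linarith : (0:ℝ) ≤ x)
  unfold F
  have hlt : 1 / Real.sqrt x < 1 := by rw [div_lt_one (by linarith)]; exact h
  have hp : 0 < 1 / Real.sqrt x := by positivity
  have := Real.log_lt_sub_one_of_pos (by linarith : 0 < 1 - 1 / Real.sqrt x) (by linarith)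
  have e : 2 / (x - Real.sqrt x) = 2 / (Real.sqrt x - 1) - 2 * (1 / Real.sqrt x) := by
    have e : x - Real.sqrt x = Real.sqrt x * (Real.sqrt x - 1) := by nlinarith
    have h1 : Real.sqrt x - 1 ≠ 0 := by linarith
    have h0 : Real.sqrt x ≠ 0 := by linarith
    rw [e]; field_simp; ring
  rw [e]; linarith

/-- Strict midpoint convexity of `1 / Q`. -/
lemma two_div_Q_lt {c h : ℝ} (hh : 0 < h) (hc : 1 < c - h) :
    2 / Q c < 1 / Q (c - h) + 1 / Q (c + h) := by
  have e : ∀ x : ℝ, 1 < x → x - Real.sqrt x = Real.sqrt x * (Real.sqrt x - 1) ∧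
      1 < Real.sqrt x ∧ Real.sqrt x ^ 2 = x := by
    intro x hx
    have h : 1 < Real.sqrt x := by rw [Real.lt_sqrt] <;> norm_num; exact hx
    have h2 := Real.sq_sqrt (by linarith : (0:ℝ) ≤ x)
    exact ⟨by nlinarith, h, h2⟩
  obtain ⟨ea, ha, ha2⟩ := e (c - h) hc
  obtain ⟨eb, hb, hb2⟩ := e (c + h) (by linarith)
  obtain ⟨ec, hcc, hc2⟩ := e c (by linarith)
  unfold Q
  rw [ea, eb, ec]
  set a := Real.sqrt (c - h)
  set b := Real.sqrt (c + h)
  set t := Real.sqrt c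
  have hab : a ≠ b := by intro h'; rw [h'] at ha2; linarith
  have hsum : a + b < 2 * t := by
    have : 0 < (a - b) ^ 2 := by positivity
    nlinarith
  have hprod : a * b < t * t := by
    have : 0 < (a - b) ^ 2 := by positivity
    nlinarith
  have hprod2 : (a - 1) * (b - 1) < (t - 1) * (t - 1) := by nlinarith
  have hXY : (a * (a - 1)) * (b * (b - 1)) < (t * (t - 1)) * (t * (t - 1)) := by
    calc (a * (a - 1)) * (b * (b - 1)) = (a * b) * ((a - 1) * (b - 1)) := by ring
      _ < (t * t) * ((t - 1) * (t - 1)) :=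
        mul_lt_mul'' hprod hprod2 (by nlinarith) (by nlinarith)
      _ = _ := by ring
  set X := a * (a - 1)
  set Y := b * (b - 1)
  have hX : 0 < X := mul_pos (by linarith) (by linarith)
  have hY : 0 < Y := mul_pos (by linarith) (by linarith)
  calc 2 / (t * (t - 1)) ^ 2 < 2 / (X * Y) := by
        apply div_lt_div_of_pos_left (by norm_num) (by positivity)
        rw [pow_two]; exact hXY
    _ ≤ 1 / X ^ 2 + 1 / Y ^ 2 := by
        have : 0 ≤ (1 / X - 1 / Y) ^ 2 := sq_nonneg _
        have e1 : (1 / X - 1 / Y) ^ 2 = 1 / X ^ 2 + 1 / Y ^ 2 - 2 / (X * Y) := by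
          field_simp
          ring
        linarith

/-- Hermite–Hadamard: `F n - F (n + 1)` is the integral of the strictly convex function
`1 / Q` over `[n, n + 1]`, hence exceeds its value at the midpoint. -/
lemma one_div_Q_lt {x : ℝ} (hx : 2 ≤ x) : 1 / Q (x + 1 / 2) < F x - F (x + 1) := by
  set c := x + 1 / 2 with hc
  let H : ℝ → ℝ := fun h => F (c - h) - F (c + h) - h * (2 / Q c)
  have hder : ∀ h ∈ Set.Icc (0:ℝ) (1 / 2),
      HasDerivAt H (1 / Q (c - h) + 1 / Q (c + h) - 2 / Q c) h := by
    intro h hh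
    have d1 := (hasDerivAt_F (by linarith [hh.2] : 1 < c - h)).comp h
      ((hasDerivAt_id h).const_sub c)
    have d2 := (hasDerivAt_F (by linarith [hh.1] : 1 < c + h)).comp h
      ((hasDerivAt_id h).const_add c)
    have d3 := (hasDerivAt_id h).mul_const (2 / Q c)
    refine ((d1.sub d2).sub d3).congr_deriv ?_
    ring
  have hmono : StrictMonoOn H (Set.Icc 0 (1 / 2)) := by
    refine strictMonoOn_of_deriv_pos (convex_Icc _ _)
      (fun h hh => (hder h hh).continuousAt.continuousWithinAt) fun h hh => ?_
    rw [interior_Icc] at hh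
    rw [(hder h ⟨hh.1.le, hh.2.le⟩).deriv]
    have := two_div_Q_lt (c := c) hh.1 (by linarith [hh.2])
    linarith
  have := hmono (Set.left_mem_Icc.2 (by norm_num)) (Set.right_mem_Icc.2 (by norm_num))
    (by norm_num : (0:ℝ) < 1 / 2)
  simp only [H] at this
  have e1 : c - 1 / 2 = x := by rw [hc]; ring
  have e2 : c + 1 / 2 = x + 1 := by rw [hc]; ring
  rw [e1, e2] at this
  simp only [sub_zero, add_zero, sub_self, zero_mul] at this
  have e3 : 1 / 2 * (2 / Q c) = 1 / Q c := by ring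
  linarith

/-! ### Bounds for `Q` and the asymptotic polynomial inequality -/

/-- An integer test for `M` to be an upper bound of `Q (n + 1 / 2)`: with `C = 2 n + 1`,
`Q (C / 2) = C² / 4 + C / 2 - C √(C / 2)`. -/
lemma Q_le_of_sq_le {n M : ℕ}
    (h : ((2 * n + 1) ^ 2 + 2 * (2 * n + 1) - 4 * M : ℤ) ^ 2 ≤ 8 * (2 * n + 1) ^ 3) :
    Q (n + 1 / 2) ≤ M := by
  have hR : ((2 * n + 1) ^ 2 + 2 * (2 * n + 1) - 4 * M : ℝ) ^ 2 ≤ 8 * (2 * n + 1) ^ 3 := by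
    exact_mod_cast h
  have hn : (0:ℝ) ≤ n := Nat.cast_nonneg n
  have ht := Real.sq_sqrt (by positivity : (0:ℝ) ≤ (n:ℝ) + 1 / 2)
  have ht0 := Real.sqrt_nonneg ((n:ℝ) + 1 / 2)
  unfold Q
  set t := Real.sqrt ((n:ℝ) + 1 / 2)
  have key : ((2 * n + 1) ^ 2 + 2 * (2 * n + 1) - 4 * M : ℝ) ≤ 4 * (2 * n + 1) * t := by
    refine abs_le_of_sq_le_sq' ?_ (by positivity) |>.2
    refine hR.trans (le_of_eq ?_)
    rw [mul_pow, ht]; ring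
  have e : (n + 1 / 2 - t) ^ 2 = (n + 1 / 2 : ℝ) ^ 2 - (2 * n + 1) * t + (n + 1 / 2) := by
    rw [← ht]
    have : (n:ℝ) = t ^ 2 - 1 / 2 := by linarith
    rw [this]; ring
  rw [e]; nlinarith

/-- The square root is eliminated by the tangent bound `y³ - t³ ≥ (3 / 2) t (y² - t²)`. -/
lemma Q_succ_le {c t : ℝ} (ht0 : 0 ≤ t) (ht : t ^ 2 = c) :
    Q (c + 1) ≤ t ^ 2 * (t - 1) ^ 2 + 2 * t ^ 2 - 3 * t + 2 := by
  have hy0 := Real.sqrt_nonneg (c + 1)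
  have hy := Real.sq_sqrt (by nlinarith : 0 ≤ c + 1)
  unfold Q
  set y := Real.sqrt (c + 1)
  have e : (c + 1 - y) ^ 2 = (t ^ 2 + 1) ^ 2 + (t ^ 2 + 1) - 2 * y ^ 3 := by
    have h : c = y ^ 2 - 1 := by linarith
    have h' : t ^ 2 = y ^ 2 - 1 := by linarith
    rw [h', h]; ring
  have h1 : 0 ≤ (y - t) ^ 2 * (y + t / 2) := by positivity
  have h2 : y ^ 3 - t ^ 3 - 3 / 2 * t * (y ^ 2 - t ^ 2) = (y - t) ^ 2 * (y + t / 2) := by ring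
  have h3 : y ^ 2 - t ^ 2 = 1 := by linarith
  rw [h3] at h2
  rw [e]; nlinarith

/-- The gain from a large gap after `s_n` outweighs the deficit of `s_n` itself: with
`t = √(n + 1 / 2)`, the left side bounds `1 / s_n + 1 / s_{n + 1}` and the right side is a lower
bound for `1 / Q (n + 1 / 2) + 1 / Q (n + 3 / 2)`. -/
lemma poly_ineq {t : ℝ} (ht : 63 / 10 ≤ t) :
    1 / (t ^ 2 * (t - 1) ^ 2 - t ^ 2 + 2 * t)
      + 1 / (t ^ 2 * (t - 1) ^ 2 - t ^ 2 + 2 * t + t ^ 3 / 2)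
      ≤ 1 / (t ^ 2 * (t - 1) ^ 2) + 1 / (t ^ 2 * (t - 1) ^ 2 + 2 * t ^ 2 - 3 * t + 2) := by
  -- after the shift `t = 63 / 10 + x` all coefficients of the cleared polynomials are positive
  obtain ⟨x, rfl, hx⟩ : ∃ x, t = 63 / 10 + x ∧ 0 ≤ x := ⟨t - 63 / 10, by ring, by linarith⟩
  have hA : 0 < (63 / 10 + x) ^ 2 * (63 / 10 + x - 1) ^ 2 - (63 / 10 + x) ^ 2 + 2 * (63 / 10 + x) := by
    ring_nf; positivity
  have hC : 0 < (63 / 10 + x) ^ 2 * (63 / 10 + x - 1) ^ 2 := by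
    ring_nf; positivity
  have hD : 0 < (63 / 10 + x) ^ 2 * (63 / 10 + x - 1) ^ 2 + 2 * (63 / 10 + x) ^ 2 - 3 * (63 / 10 + x) + 2 := by
    ring_nf; positivity
  have hB : 0 < (63 / 10 + x) ^ 2 * (63 / 10 + x - 1) ^ 2 - (63 / 10 + x) ^ 2 + 2 * (63 / 10 + x) + (63 / 10 + x) ^ 3 / 2 := by
    positivity
  rw [div_add_div _ _ hA.ne' hB.ne', div_add_div _ _ hC.ne' hD.ne',
    div_le_div_iff₀ (by positivity) (by positivity), ← sub_nonneg]
  ring_nf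
  positivity


/-! ### Each term, alone or with its successor, is small -/

/-- Master inequality with the integral tangent `D (D - 1) ≥ 2 k D - k (k + 1)`. -/
lemma master_nat {s : ℕ → ℕ} (hmono : StrictMono s) (hS : IsSidon (Set.range s))
    {n : ℕ} (hn : 1 ≤ n) {u : ℕ} (hu : 1 ≤ u) (k : ℕ) :
    2 * k * (n * u) + u + k * (k + 1) ≤ u * u + k * (k + 1) * (s (n - 1) + u) ∧
    2 * k * (n * u + u + s (n - 1)) + u + k * (k + 1) ≤
      u * u + k * (k + 1) * (s (n - 1) + u) + 2 * k * s n := by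
  obtain ⟨h1, h2⟩ := master hmono hS hn hu (p := 2 * k) (q := k * (k + 1)) (by positivity) (by
    intro D
    have h : (0:ℤ) ≤ ((D:ℤ) - k) * (D - k - 1) := by
      rcases le_or_gt (D:ℤ) k with h | h
      · exact mul_nonneg_of_nonpos_of_nonpos (by omega) (by omega)
      · exact mul_nonneg (by omega) (by omega)
    have h' : (0:ℝ) ≤ ((D:ℝ) - k) * (D - k - 1) := by exact_mod_cast h
    nlinarith)
  constructor
  · have : (2 * k * (n * u) + u + k * (k + 1) : ℝ) ≤
        u * u + k * (k + 1) * (s (n - 1) + u) := by linarith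
    exact_mod_cast this
  · have : (2 * k * (n * u + u + s (n - 1)) + u + k * (k + 1) : ℝ) ≤
        u * u + k * (k + 1) * (s (n - 1) + u) + 2 * k * s n := by linarith
    exact_mod_cast this

/-- If `s_n = m - 1` would violate the master inequality, then `s_n ≥ m`. -/
lemma le_of_cert_aux {s : ℕ → ℕ} (hmono : StrictMono s) (hS : IsSidon (Set.range s))
    {n k u m : ℕ} (hn : 1 ≤ n) (hu : 1 ≤ u)
    (h : u * u + k * (k + 1) * (m + u) < 2 * k * (n * u) + u + 2 * (k * (k + 1))) :
    m ≤ s (n - 1) := by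
  by_contra hlt
  have h1 := (master_nat hmono hS hn hu k).1
  have h2 : k * (k + 1) * (s (n - 1) + 1 + u) ≤ k * (k + 1) * (m + u) :=
    Nat.mul_le_mul_left _ (by omega)
  have h3 : k * (k + 1) * (s (n - 1) + 1 + u) = k * (k + 1) * (s (n - 1) + u) + k * (k + 1) := by
    ring
  omega

/-- Certificate, with window length `u` and tangent `k`, that `s_n ≥ m ≥ Q (n + 1 / 2)`. -/
lemma le_of_cert {s : ℕ → ℕ} (hmono : StrictMono s) (hS : IsSidon (Set.range s))
    {n k u m : ℕ} (hn : 1 ≤ n) (hu : 1 ≤ u)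
    (h : u * u + k * (k + 1) * (m + u) < 2 * k * (n * u) + u + 2 * (k * (k + 1)))
    (hQ : ((2 * n + 1) ^ 2 + 2 * (2 * n + 1) - 4 * m : ℤ) ^ 2 ≤ 8 * (2 * n + 1) ^ 3) :
    Q (n + 1 / 2) ≤ s (n - 1) :=
  (Q_le_of_sq_le hQ).trans (by exact_mod_cast le_of_cert_aux hmono hS hn hu h)

/-- Certificate for the dichotomy at `n`: windows of length `u` give `s_n ≥ m`; if the gap
`s_{n + 1} - s_n` is at most `g`, windows of length `v` improve this to `s_n ≥ M`, and otherwise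
`s_{n + 1} ≥ m + g + 1`. Here `M` and `M'` bound `Q (n + 1 / 2)` and `Q (n + 3 / 2)` from above. -/
lemma pair_of_cert {s : ℕ → ℕ} (hmono : StrictMono s) (hS : IsSidon (Set.range s))
    {n k u v m g M M' : ℕ}
    (h : 1 ≤ n ∧ 1 ≤ u ∧ 1 ≤ v ∧ 1 ≤ m ∧
      u * u + k * (k + 1) * (m + u) < 2 * k * (n * u) + u + 2 * (k * (k + 1)) ∧
      v * v + k * (k + 1) * (M + v) + 2 * k * g < 2 * k * (n * v + v) + v + 2 * (k * (k + 1)) ∧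
      ((2 * n + 1) ^ 2 + 2 * (2 * n + 1) - 4 * M : ℤ) ^ 2 ≤ 8 * (2 * n + 1) ^ 3 ∧
      ((2 * (n + 1 : ℕ) + 1) ^ 2 + 2 * (2 * (n + 1 : ℕ) + 1) - 4 * M' : ℤ) ^ 2 ≤
        8 * (2 * (n + 1 : ℕ) + 1) ^ 3 ∧
      (2 * m + g + 1) * (M * M') ≤ (M + M') * (m * (m + g + 1))) :
    Q (n + 1 / 2) ≤ s (n - 1) ∨
      1 / (s (n - 1) : ℝ) + 1 / s n ≤ 1 / Q (n + 1 / 2) + 1 / Q (n + 1 + 1 / 2) := by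
  obtain ⟨hn, hu, hv, hm, h1, h2, h3, h4, h5⟩ := h
  have hms := le_of_cert_aux hmono hS hn hu h1
  have hlt : s (n - 1) < s n := hmono (by omega)
  have hQ := Q_le_of_sq_le h3
  have hQ' := Q_le_of_sq_le h4
  push_cast at hQ'
  have hn1 : (1:ℝ) ≤ n := by exact_mod_cast hn
  have hQ0 : 0 < Q ((n:ℝ) + 1 / 2) := Q_pos (by linarith)
  have hQ0' : 0 < Q ((n:ℝ) + 1 + 1 / 2) := Q_pos (by linarith)
  rcases le_or_gt (s n) (s (n - 1) + g) with hg | hg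
  · left
    refine hQ.trans ?_
    have hM : M ≤ s (n - 1) := by
      by_contra hlt
      have e1 := (master_nat hmono hS hn hv k).2
      have e2 : k * (k + 1) * (s (n - 1) + 1 + v) ≤ k * (k + 1) * (M + v) :=
        Nat.mul_le_mul_left _ (by omega)
      have e3 : k * (k + 1) * (s (n - 1) + 1 + v) =
        k * (k + 1) * (s (n - 1) + v) + k * (k + 1) := by ring
      have e4 : 2 * k * s n ≤ 2 * k * (s (n - 1) + g) := Nat.mul_le_mul_left _ hg
      have e5 : 2 * k * (s (n - 1) + g) = 2 * k * s (n - 1) + 2 * k * g := by ring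
      have e6 : 2 * k * (n * v + v + s (n - 1)) = 2 * k * (n * v + v) + 2 * k * s (n - 1) := by
        ring
      omega
    exact_mod_cast hM
  · right
    have hm0 : (0:ℝ) < m := by exact_mod_cast hm
    have hM0 : (0:ℝ) < M := hQ0.trans_le hQ
    have hM0' : (0:ℝ) < M' := hQ0'.trans_le hQ'
    have a1 : (m:ℝ) ≤ s (n - 1) := by exact_mod_cast hms
    have a2 : (m + g + 1 : ℝ) ≤ s n := by
      have : m + g + 1 ≤ s n := by omega
      exact_mod_cast this
    calc 1 / (s (n - 1) : ℝ) + 1 / s n ≤ 1 / m + 1 / (m + g + 1) := by gcongr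
      _ ≤ 1 / M + 1 / M' := by
        rw [div_add_div _ _ (by positivity) (by positivity),
          div_add_div _ _ (by positivity) (by positivity),
          div_le_div_iff₀ (by positivity) (by positivity)]
        have : ((2 * m + g + 1) * (M * M') : ℝ) ≤ (M + M') * (m * (m + g + 1)) := by
          exact_mod_cast h5
        linarith
      _ ≤ _ := by gcongr

/-- The certificates use `k = ⌊√n⌋`, `u = k n - k (k + 1) / 2` and
`v = k (n + 1) - k (k + 1) / 2`, the optimal window lengths for `n` and for `n + 1` elements; the
remaining parameters are then the best ones available. For `n ≤ 8` the bound on `s_n` alone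
suffices. -/
lemma dichotomy_small {s : ℕ → ℕ} (hmono : StrictMono s) (hS : IsSidon (Set.range s))
    {n : ℕ} (hn : 2 ≤ n) (hn' : n ≤ 40) :
    Q (n + 1 / 2) ≤ s (n - 1) ∨
      1 / (s (n - 1) : ℝ) + 1 / s n ≤ 1 / Q (n + 1 / 2) + 1 / Q (n + 1 + 1 / 2) := by
  interval_cases n
  · exact Or.inl (le_of_cert hmono hS (k := 1) (u := 1) (m := 2)
      (by norm_num) (by norm_num) (by norm_num) (by norm_num))
  · exact Or.inl (le_of_cert hmono hS (k := 1) (u := 2) (m := 4)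
      (by norm_num) (by norm_num) (by norm_num) (by norm_num))
  · exact Or.inl (le_of_cert hmono hS (k := 2) (u := 5) (m := 6)
      (by norm_num) (by norm_num) (by norm_num) (by norm_num))
  · exact Or.inl (le_of_cert hmono hS (k := 2) (u := 7) (m := 11)
      (by norm_num) (by norm_num) (by norm_num) (by norm_num))
  · exact Or.inl (le_of_cert hmono hS (k := 2) (u := 9) (m := 16)
      (by norm_num) (by norm_num) (by norm_num) (by norm_num))
  · exact Or.inl (le_of_cert hmono hS (k := 2) (u := 11) (m := 23)
      (by norm_num) (by norm_num) (by norm_num) (by norm_num))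
  · exact Or.inl (le_of_cert hmono hS (k := 2) (u := 13) (m := 32)
      (by norm_num) (by norm_num) (by norm_num) (by norm_num))
  · exact pair_of_cert hmono hS (k := 3) (u := 21) (v := 24) (m := 40) (g := 19) (M := 42)
      (M' := 53) (by norm_num)
  · exact pair_of_cert hmono hS (k := 3) (u := 24) (v := 27) (m := 51) (g := 23) (M := 53)
      (M' := 66) (by norm_num)
  · exact pair_of_cert hmono hS (k := 3) (u := 27) (v := 30) (m := 64) (g := 26) (M := 66)
      (M' := 81) (by norm_num)
  · exact pair_of_cert hmono hS (k := 3) (u := 30) (v := 33) (m := 79) (g := 28) (M := 81)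
      (M' := 97) (by norm_num)
  · exact pair_of_cert hmono hS (k := 3) (u := 33) (v := 36) (m := 95) (g := 31) (M := 97)
      (M' := 115) (by norm_num)
  · exact pair_of_cert hmono hS (k := 3) (u := 36) (v := 39) (m := 112) (g := 33) (M := 115)
      (M' := 134) (by norm_num)
  · exact pair_of_cert hmono hS (k := 3) (u := 39) (v := 42) (m := 131) (g := 36) (M := 134)
      (M' := 155) (by norm_num)
  · exact pair_of_cert hmono hS (k := 4) (u := 54) (v := 58) (m := 150) (g := 45) (M := 155)
      (M' := 178) (by norm_num)
  · exact pair_of_cert hmono hS (k := 4) (u := 58) (v := 62) (m := 173) (g := 48) (M := 178)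
      (M' := 202) (by norm_num)
  · exact pair_of_cert hmono hS (k := 4) (u := 62) (v := 66) (m := 197) (g := 52) (M := 202)
      (M' := 228) (by norm_num)
  · exact pair_of_cert hmono hS (k := 4) (u := 66) (v := 70) (m := 223) (g := 56) (M := 228)
      (M' := 256) (by norm_num)
  · exact pair_of_cert hmono hS (k := 4) (u := 70) (v := 74) (m := 250) (g := 58) (M := 256)
      (M' := 285) (by norm_num)
  · exact pair_of_cert hmono hS (k := 4) (u := 74) (v := 78) (m := 279) (g := 62) (M := 285)
      (M' := 316) (by norm_num)
  · exact pair_of_cert hmono hS (k := 4) (u := 78) (v := 82) (m := 310) (g := 65) (M := 316)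
      (M' := 348) (by norm_num)
  · exact pair_of_cert hmono hS (k := 4) (u := 82) (v := 86) (m := 342) (g := 70) (M := 348)
      (M' := 383) (by norm_num)
  · exact pair_of_cert hmono hS (k := 4) (u := 86) (v := 90) (m := 376) (g := 71) (M := 383)
      (M' := 419) (by norm_num)
  · exact pair_of_cert hmono hS (k := 5) (u := 110) (v := 115) (m := 408) (g := 82) (M := 419)
      (M' := 456) (by norm_num)
  · exact pair_of_cert hmono hS (k := 5) (u := 115) (v := 120) (m := 446) (g := 89) (M := 456)
      (M' := 496) (by norm_num)
  · exact pair_of_cert hmono hS (k := 5) (u := 120) (v := 125) (m := 485) (g := 92) (M := 496)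
      (M' := 537) (by norm_num)
  · exact pair_of_cert hmono hS (k := 5) (u := 125) (v := 130) (m := 526) (g := 97) (M := 537)
      (M' := 580) (by norm_num)
  · exact pair_of_cert hmono hS (k := 5) (u := 130) (v := 135) (m := 569) (g := 101) (M := 580)
      (M' := 624) (by norm_num)
  · exact pair_of_cert hmono hS (k := 5) (u := 135) (v := 140) (m := 613) (g := 107) (M := 624)
      (M' := 671) (by norm_num)
  · exact pair_of_cert hmono hS (k := 5) (u := 140) (v := 145) (m := 659) (g := 109) (M := 671)
      (M' := 719) (by norm_num)
  · exact pair_of_cert hmono hS (k := 5) (u := 145) (v := 150) (m := 707) (g := 113) (M := 719)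
      (M' := 768) (by norm_num)
  · exact pair_of_cert hmono hS (k := 5) (u := 150) (v := 155) (m := 756) (g := 119) (M := 768)
      (M' := 820) (by norm_num)
  · exact pair_of_cert hmono hS (k := 5) (u := 155) (v := 160) (m := 807) (g := 121) (M := 820)
      (M' := 873) (by norm_num)
  · exact pair_of_cert hmono hS (k := 5) (u := 160) (v := 165) (m := 860) (g := 125) (M := 873)
      (M' := 928) (by norm_num)
  · exact pair_of_cert hmono hS (k := 6) (u := 195) (v := 201) (m := 911) (g := 142) (M := 928)
      (M' := 985) (by norm_num)
  · exact pair_of_cert hmono hS (k := 6) (u := 201) (v := 207) (m := 968) (g := 147) (M := 985)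
      (M' := 1043) (by norm_num)
  · exact pair_of_cert hmono hS (k := 6) (u := 207) (v := 213) (m := 1027) (g := 154) (M := 1043)
      (M' := 1104) (by norm_num)
  · exact pair_of_cert hmono hS (k := 6) (u := 213) (v := 219) (m := 1087) (g := 157) (M := 1104)
      (M' := 1166) (by norm_num)
  · exact pair_of_cert hmono hS (k := 6) (u := 219) (v := 225) (m := 1149) (g := 163) (M := 1166)
      (M' := 1230) (by norm_num)

/-- With `t = √(n + 1 / 2)` and `w = t³ - t²`, the master inequality with the tangent of slope
`2 t - 1` and window length `u ≈ w` gives `s_n ≥ w² / t² = Q (n + 1 / 2)` as soon as `s_{n + 1}`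
lies in about half as many windows as a full element. Otherwise the gap `s_{n + 1} - s_n`
exceeds `t³ / 2`. -/
lemma dichotomy_large {s : ℕ → ℕ} (hmono : StrictMono s) (hS : IsSidon (Set.range s))
    {n : ℕ} (hn : 40 ≤ n) :
    Q (n + 1 / 2) ≤ s (n - 1) ∨
      1 / (s (n - 1) : ℝ) + 1 / s n ≤ 1 / Q (n + 1 / 2) + 1 / Q (n + 1 + 1 / 2) := by
  have hnR : (40:ℝ) ≤ n := by exact_mod_cast hn
  set t := Real.sqrt ((n:ℝ) + 1 / 2) with ht_def
  have ht : t ^ 2 = n + 1 / 2 := Real.sq_sqrt (by linarith)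
  have ht0 : 0 ≤ t := Real.sqrt_nonneg _
  have ht6 : 63 / 10 ≤ t := Real.le_sqrt_of_sq_le (by norm_num; linarith)
  have hQ : Q ((n:ℝ) + 1 / 2) = t ^ 2 * (t - 1) ^ 2 := by
    unfold Q; rw [← ht_def, ← ht]; ring
  have hQ' : Q ((n:ℝ) + 1 + 1 / 2) ≤ t ^ 2 * (t - 1) ^ 2 + 2 * t ^ 2 - 3 * t + 2 := by
    have := Q_succ_le ht0 ht
    rwa [show (n:ℝ) + 1 + 1 / 2 = n + 1 / 2 + 1 by ring]
  have hQ0' : 0 < Q ((n:ℝ) + 1 + 1 / 2) := Q_pos (by linarith)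
  obtain ⟨w, hw⟩ : ∃ w, w = t ^ 3 - t ^ 2 := ⟨_, rfl⟩
  have hw1 : 1 ≤ w := by nlinarith
  -- a window length within `1 / 2` of the optimal `t³ - t² + 1 / 2`
  obtain ⟨u, hu⟩ : ∃ u, u = ⌈w⌉₊ := ⟨_, rfl⟩
  have hu1 : w ≤ u := hu ▸ Nat.le_ceil w
  have hu2 : (u:ℝ) < w + 1 := hu ▸ Nat.ceil_lt_add_one (by linarith)
  have huN : 1 ≤ u := by
    have : (1:ℝ) ≤ u := by linarith
    exact_mod_cast this
  obtain ⟨h1, h2⟩ := master hmono hS (by omega : 1 ≤ n) huN (p := 2 * t - 1) (q := t ^ 2)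
    (by linarith) (fun D => by nlinarith [sq_nonneg ((D:ℝ) - t)])
  have hn_eq : (n:ℝ) = t ^ 2 - 1 / 2 := by linarith
  rw [hn_eq] at h1 h2
  have hround : 0 ≤ ((u:ℝ) - w) * (w + 1 - u) := mul_nonneg (by linarith) (by linarith)
  have ht2 : 0 < t ^ 2 := by positivity
  have hlt : s (n - 1) < s n := hmono (by omega)
  generalize (s (n - 1) : ℝ) = a at *
  generalize (s n : ℝ) = b at *
  have hopt : w ^ 2 + w ≤ u * (2 * w + 1 - u) := by nlinarith
  rcases le_or_gt (b - a) (u / 2 + t ^ 2 / 2) with hg | hg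
  · left
    rw [hQ]
    have h3 := mul_le_mul_of_nonneg_left hg (by linarith : 0 ≤ 2 * t - 1)
    have h4 : t ^ 2 * (t ^ 2 * (t - 1) ^ 2) ≤ t ^ 2 * a := by
      have e : t ^ 2 * (t ^ 2 * (t - 1) ^ 2) = w ^ 2 := by rw [hw]; ring
      have e2 : (u:ℝ) * (2 * w + 1 - u) = u * (2 * (t ^ 3 - t ^ 2) + 1 - u) := by rw [← hw]
      rw [e]
      nlinarith
    exact le_of_mul_le_mul_left h4 ht2
  · right
    have ha : t ^ 2 * (t - 1) ^ 2 - t ^ 2 + 2 * t ≤ a := by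
      have h4 : t ^ 2 * (t ^ 2 * (t - 1) ^ 2 - t ^ 2 + 2 * t) ≤ t ^ 2 * a := by
        have e : t ^ 2 * (t ^ 2 * (t - 1) ^ 2) = w ^ 2 := by rw [hw]; ring
        have e2 : (u:ℝ) * (2 * w + 1 - u) = u * (2 * (t ^ 3 - t ^ 2) + 1 - u) := by rw [← hw]
        have h5 : (2 * t - 1) * u ≤ (2 * t - 1) * (w + 1) :=
          mul_le_mul_of_nonneg_left hu2.le (by linarith)
        have h6 : (2 * t - 1) * (w + 1) = 2 * t ^ 4 - 3 * t ^ 3 + t ^ 2 + 2 * t - 1 := by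
          rw [hw]; ring
        nlinarith
      exact le_of_mul_le_mul_left h4 ht2
    have hb : t ^ 2 * (t - 1) ^ 2 - t ^ 2 + 2 * t + t ^ 3 / 2 ≤ b := by linarith
    have hA : 0 < t ^ 2 * (t - 1) ^ 2 - t ^ 2 + 2 * t := by nlinarith
    have hp := poly_ineq ht6
    rw [hQ]
    calc 1 / a + 1 / b ≤ 1 / (t ^ 2 * (t - 1) ^ 2 - t ^ 2 + 2 * t)
          + 1 / (t ^ 2 * (t - 1) ^ 2 - t ^ 2 + 2 * t + t ^ 3 / 2) := by gcongr
      _ ≤ _ := hp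
      _ ≤ _ := by gcongr

/-- Either the term `1 / s_n`, or the sum of two consecutive terms, is less than the increment of
the telescoping bound. -/
lemma dichotomy {s : ℕ → ℕ} (hmono : StrictMono s) (hS : IsSidon (Set.range s))
    {n : ℕ} (hn : 2 ≤ n) :
    1 / (s (n - 1) : ℝ) < F n - F (n + 1) ∨
      1 / (s (n - 1) : ℝ) + 1 / s n < F n - F (n + 2) := by
  have hnR : (2:ℝ) ≤ n := by exact_mod_cast hn
  have hQ0 : 0 < Q ((n:ℝ) + 1 / 2) := Q_pos (by linarith)
  have h1 := one_div_Q_lt hnR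
  have h2 := one_div_Q_lt (by linarith : (2:ℝ) ≤ n + 1)
  rw [show (n:ℝ) + 1 + 1 = n + 2 by ring] at h2
  have h : Q (n + 1 / 2) ≤ s (n - 1) ∨
      1 / (s (n - 1) : ℝ) + 1 / s n ≤ 1 / Q (n + 1 / 2) + 1 / Q (n + 1 + 1 / 2) := by
    rcases le_total n 40 with h | h
    · exact dichotomy_small hmono hS hn h
    · exact dichotomy_large hmono hS h
  rcases h with h | h
  · left
    exact (one_div_le_one_div_of_le hQ0 h).trans_lt h1
  · right
    linarith

/-- Induction on the number of terms, removing blocks of one or two terms; a block that overshoots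
the range is harmless since `F ≥ 0`. -/
lemma partial_sum_le {s : ℕ → ℕ} (hmono : StrictMono s) (hS : IsSidon (Set.range s)) (d : ℕ) :
    ∀ n : ℕ, 2 ≤ n → ∑ i ∈ Finset.range d, 1 / (s (n - 1 + i) : ℝ) ≤ F n := by
  induction d using Nat.strong_induction_on with
  | _ d ih =>
    intro n hn
    have hnR : (2:ℝ) ≤ n := by exact_mod_cast hn
    have hF1 : 0 ≤ F ((n:ℝ) + 1) := F_nonneg (by linarith)
    have hF2 : 0 ≤ F ((n:ℝ) + 2) := F_nonneg (by linarith)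
    have hb : (0:ℝ) ≤ 1 / s n := by positivity
    rcases d with _ | _ | d
    · simpa using F_nonneg (by linarith : (1:ℝ) < n)
    · simp only [zero_add, Finset.range_one, Finset.sum_singleton, add_zero]
      rcases dichotomy hmono hS hn with h | h <;> linarith
    · rcases dichotomy hmono hS hn with h | h
      · have := ih (d + 1) (by omega) (n + 1) (by omega)
        rw [Finset.sum_range_succ']
        have e : ∀ i, n - 1 + (i + 1) = n + i := by omega
        simp only [e, add_zero]
        push_cast at this
        linarith
      · have := ih d (by omega) (n + 2) (by omega)
        rw [Finset.sum_range_succ', Finset.sum_range_succ']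
        have e : ∀ i, n - 1 + (i + 1 + 1) = n + 1 + i := by omega
        have e' : n - 1 + (0 + 1) = n := by omega
        simp only [e, e', add_zero]
        push_cast at this
        linarith

lemma tsum_lt {s : ℕ → ℕ} (hmono : StrictMono s) (hS : IsSidon (Set.range s))
    {N : ℕ} (hN : 2 ≤ N) :
    (∑' k : ℕ, (1 : ℝ≥0∞) / (s (N - 1 + k))) < ENNReal.ofReal (F N) := by
  have hpos : ∀ i, 0 < s i := fun i => hS.1 _ ⟨i, rfl⟩
  have hNR : (2:ℝ) ≤ N := by exact_mod_cast hN
  have hF1 : 0 ≤ F ((N:ℝ) + 1) := F_nonneg (by linarith)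
  have hF2 : 0 ≤ F ((N:ℝ) + 2) := F_nonneg (by linarith)
  have hb : (0:ℝ) ≤ 1 / s N := by positivity
  have ha : (0:ℝ) ≤ 1 / s (N - 1) := by positivity
  -- the first block of one or two terms already gains a fixed amount
  obtain ⟨B, hB, hd⟩ : ∃ B : ℝ, B < F N ∧
      ∀ d, ∑ i ∈ Finset.range (d + 2), 1 / (s (N - 1 + i) : ℝ) ≤ B := by
    rcases dichotomy hmono hS hN with h | h
    · refine ⟨1 / s (N - 1) + F (N + 1), by linarith, fun d => ?_⟩
      have := partial_sum_le hmono hS (d + 1) (N + 1) (by omega)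
      rw [Finset.sum_range_succ']
      have e : ∀ i, N - 1 + (i + 1) = N + i := by omega
      simp only [e, add_zero]
      push_cast at this
      linarith
    · refine ⟨1 / s (N - 1) + 1 / s N + F (N + 2), by linarith, fun d => ?_⟩
      have := partial_sum_le hmono hS d (N + 2) (by omega)
      rw [Finset.sum_range_succ', Finset.sum_range_succ']
      have e : ∀ i, N - 1 + (i + 1 + 1) = N + 1 + i := by omega
      have e' : N - 1 + (0 + 1) = N := by omega
      simp only [e, e', add_zero]
      push_cast at this
      linarith
  have hB0 : 0 ≤ B := le_trans (Finset.sum_nonneg fun i _ => by positivity) (hd 0)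
  refine lt_of_le_of_lt ?_ ((ENNReal.ofReal_lt_ofReal_iff_of_nonneg hB0).2 hB)
  refine ENNReal.tsum_le_of_sum_range_le fun d => ?_
  have hterm : ∀ k, (1 : ℝ≥0∞) / (s (N - 1 + k)) = ENNReal.ofReal (1 / (s (N - 1 + k) : ℝ)) := by
    intro k
    rw [ENNReal.ofReal_div_of_pos (by exact_mod_cast hpos _), ENNReal.ofReal_one,
      ENNReal.ofReal_natCast]
  simp_rw [hterm]
  rw [← ENNReal.ofReal_sum_of_nonneg fun i _ => by positivity]
  refine ENNReal.ofReal_le_ofReal (le_trans ?_ (hd d))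
  exact Finset.sum_le_sum_of_subset_of_nonneg (Finset.range_mono (by omega))
    fun i _ _ => by positivity

/-! ### The tail bounds -/

/-- If `(s k)_{k ≥ 0}` is the strictly increasing enumeration of an infinite Sidon set
(so `s (k - 1)` is the `k`-th element `s_k` of the paper, i.e. `s 0 = s_1 < s 1 = s_2 < ⋯`),
then for every `N ≥ 2` the tail `∑_{n = N}^{∞} 1 / s_n = ∑_{k = 0}^{∞} 1 / s (N - 1 + k)`
satisfies both stated bounds. -/
theorem tail_recip_sum_bounds (s : ℕ → ℕ) (hmono : StrictMono s)
    (hS : IsSidon (Set.range s)) (N : ℕ) (hN : 2 ≤ N) :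
    (∑' k : ℕ, (1 : ℝ≥0∞) / (s (N - 1 + k))) <
        ENNReal.ofReal (2 * Real.log (1 - 1 / Real.sqrt N) + 2 / (Real.sqrt N - 1)) ∧
      (∑' k : ℕ, (1 : ℝ≥0∞) / (s (N - 1 + k))) <
        ENNReal.ofReal (2 / ((N : ℝ) - Real.sqrt N)) := by
  have hNR : (1:ℝ) < N := by exact_mod_cast hN
  have h := tsum_lt hmono hS hN
  refine ⟨h, h.trans ?_⟩
  exact (ENNReal.ofReal_lt_ofReal_iff_of_nonneg (F_nonneg hNR)).2 (F_lt hNR)
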